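/- Under these hypotheses, the centralizer in G of every nonidentity element of D is contained in D; that is, for every u ∈ D with u ≠ 1 one has C_G(u) = C_D(u) ≤ D. -/

import Mathlib

theorem aux_count {p : ℕ} {G : Type*} [Group G] [Fintype G]
    (hkl : Nat.card (ConjClasses G) =
      Nat.card {c : ConjClasses G // ∀ g ∈ c.carrier, ¬ p ∣ orderOf g} + 2)
    (a b c : G) (ha : p ∣ orderOf a) (hb : p ∣ orderOf b) (hc : p ∣ orderOf c)
    (hab : ¬ IsConj a b) (hcb : ¬ IsConj c b) : IsConj c a := by
  classical
  have h1 : Nat.card {c : ConjClasses G // ¬ ∀ g ∈ c.carrier, ¬ p ∣ orderOf g} = 2 := by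
    have := Nat.card_congr
      (Equiv.sumCompl (fun c : ConjClasses G => ∀ g ∈ c.carrier, ¬ p ∣ orderOf g))
    rw [Nat.card_sum] at this
    omega
  have key : ∀ v : G, p ∣ orderOf v →
      ¬ ∀ g ∈ (ConjClasses.mk v).carrier, ¬ p ∣ orderOf g :=
    fun v hv h => h v ConjClasses.mem_carrier_mk hv
  obtain ⟨x, y, hxy, hu⟩ := Nat.card_eq_two_iff.1 h1
  have hall : ∀ z, z = x ∨ z = y := fun z => by
    have : z ∈ ({x, y} : Set _) := hu ▸ Set.mem_univ z
    simpa using this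
  rw [← ConjClasses.mk_eq_mk_iff_isConj] at hab hcb ⊢
  have e1 := hall ⟨_, key a ha⟩
  have e2 := hall ⟨_, key b hb⟩
  have e3 := hall ⟨_, key c hc⟩
  have nab : (⟨_, key a ha⟩ : {c : ConjClasses G // ¬ ∀ g ∈ c.carrier, ¬ p ∣ orderOf g}) ≠
    ⟨_, key b hb⟩ := fun h => hab (congrArg Subtype.val h)
  have ncb : (⟨_, key c hc⟩ : {c : ConjClasses G // ¬ ∀ g ∈ c.carrier, ¬ p ∣ orderOf g}) ≠
    ⟨_, key b hb⟩ := fun h => hcb (congrArg Subtype.val h)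
  have : (⟨_, key c hc⟩ : {c : ConjClasses G // ¬ ∀ g ∈ c.carrier, ¬ p ∣ orderOf g}) =
    ⟨_, key a ha⟩ := by
    rcases e1 with e1 | e1 <;> rcases e2 with e2 | e2 <;> rcases e3 with e3 | e3 <;>
      simp_all
  exact congrArg Subtype.val this

theorem aux_conj_order {G : Type*} [Group G] {a b : G} (h : IsConj a b) :
    orderOf a = orderOf b := by
  obtain ⟨g, rfl⟩ := isConj_iff.1 h
  have := orderOf_injective (MulAut.conj g).toMonoidHom (MulAut.conj g).injective a
  simpa using this.symm

/-- An element of order coprime to the index lies in a normal subgroup. -/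
theorem aux_mem {G : Type*} [Group G] (N : Subgroup G) [N.Normal] (x : G)
    (h : Nat.Coprime (orderOf x) N.index) : x ∈ N := by
  rw [← QuotientGroup.eq_one_iff]
  rw [← orderOf_eq_one_iff]
  apply Nat.eq_one_of_dvd_coprimes h
  · exact orderOf_map_dvd (QuotientGroup.mk' N) x
  · exact orderOf_dvd_natCard _

/-- Hypotheses: `G` is a finite group with normal Sylow `p`-subgroup `D`, `E` is a
`p'`-complement acting faithfully on `D`, `k(G) - ℓ_p(G) = 2`, and the centralizer of
every element of `D` of order `p` is `p`-nilpotent. -/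
theorem stmt_5 {p : ℕ} (hp : p.Prime) {G : Type*} [Group G] [Fintype G]
    (D E : Subgroup G)
    (hDn : D.Normal)
    (hDpgrp : IsPGroup p D)
    (hDsyl : ¬ p ∣ D.index)
    (hEp' : Nat.Coprime (Nat.card E) p)
    (hDEinf : D ⊓ E = ⊥)
    (hDEsup : D ⊔ E = ⊤)
    (hfaith : ∀ y ∈ E, (∀ d ∈ D, y * d = d * y) → y = 1)
    (hkl : Nat.card (ConjClasses G) =
      Nat.card {c : ConjClasses G // ∀ g ∈ c.carrier, ¬ p ∣ orderOf g} + 2)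
    (hnilp : ∀ u : G, u ∈ D → orderOf u = p →
      ∃ N : Subgroup (Subgroup.centralizer ({u} : Set G)), N.Normal ∧
        Nat.Coprime (Nat.card N) p ∧ ∃ n : ℕ, N.index = p ^ n) :
    ∀ u : G, u ∈ D → u ≠ 1 → Subgroup.centralizer ({u} : Set G) ≤ D := by
  classical
  have := Fact.mk hp
  intro u hu hu1 x hx
  by_contra hxD
  have hordD : ∀ d ∈ D, ∃ k, orderOf d = p ^ k := by
    intro d hd
    obtain ⟨k, hk⟩ := IsPGroup.iff_orderOf.1 hDpgrp ⟨d, hd⟩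
    exact ⟨k, by rw [← hk]; exact (Subgroup.orderOf_mk d hd).symm⟩
  have hdvdD : ∀ d ∈ D, d ≠ 1 → p ∣ orderOf d := by
    intro d hd h1
    obtain ⟨k, hk⟩ := hordD d hd
    rw [hk]
    apply dvd_pow_self
    rintro rfl
    exact h1 (orderOf_eq_one_iff.1 (by simpa using hk))
  have hxu : Commute x u := (Subgroup.mem_centralizer_singleton_iff.1 hx)
  -- p'-element y
  obtain ⟨y, hyu, hy1, hyp⟩ : ∃ y : G, Commute y u ∧ y ≠ 1 ∧ ¬ p ∣ orderOf y := by
    obtain ⟨a, m, hm, ham⟩ := Nat.exists_eq_pow_mul_and_not_dvd (orderOf_pos x).ne' p hp.ne_one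
    have hpos : 0 < p ^ a := pow_pos hp.pos a
    have ho : orderOf (x ^ (p ^ a)) = m := by
      rw [orderOf_pow_of_dvd hpos.ne' (ham ▸ dvd_mul_right _ _), ham]
      exact Nat.mul_div_cancel_left _ hpos
    refine ⟨x ^ (p ^ a), hxu.pow_left _, ?_, by rwa [ho]⟩
    intro h1
    apply hxD
    apply aux_mem D x
    rw [h1, orderOf_one] at ho
    rw [ham, ← ho, mul_one]
    exact Nat.Coprime.pow_left _ ((Nat.Prime.coprime_iff_not_dvd hp).2 hDsyl)
  have hyc : Nat.Coprime p (orderOf y) := (Nat.Prime.coprime_iff_not_dvd hp).2 hyp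
  have huy : orderOf (y * u) = orderOf y * orderOf u := by
    apply hyu.orderOf_mul_eq_mul_orderOf_of_coprime
    obtain ⟨k, hk⟩ := hordD u hu
    rw [hk]
    exact (Nat.Coprime.pow_left k hyc).symm
  have hnc : ∀ d ∈ D, ¬ IsConj d (y * u) := by
    intro d hd h
    have h2 := aux_conj_order h
    obtain ⟨k, hk⟩ := hordD d hd
    rw [huy, hk] at h2
    apply hy1
    rw [← orderOf_eq_one_iff]
    exact Nat.eq_one_of_dvd_coprimes (Nat.Coprime.pow_left k hyc) (h2 ▸ dvd_mul_right _ _)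
      dvd_rfl
  have hconj : ∀ v ∈ D, v ≠ 1 → IsConj v u := by
    intro v hv hv1
    exact aux_count hkl u (y * u) v (hdvdD u hu hu1)
      (huy ▸ (dvd_mul_of_dvd_right (hdvdD u hu hu1) _)) (hdvdD v hv hv1) (hnc u hu) (hnc v hv)
  have hup : orderOf u = p := by
    have h1 := hdvdD u hu hu1
    have h2 : orderOf (u ^ (orderOf u / p)) = p :=
      orderOf_pow_orderOf_div (orderOf_pos u).ne' h1
    rw [← aux_conj_order (hconj _ (D.pow_mem hu _) ?_), h2]
    intro h
    rw [h, orderOf_one] at h2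
    exact hp.ne_one h2.symm
  have hab : ∀ v ∈ D, ∀ d ∈ D, v * d = d * v := by
    have hnt : Nontrivial D := ⟨⟨⟨u, hu⟩, 1, fun h => hu1 (congrArg Subtype.val h)⟩⟩
    have := hDpgrp.center_nontrivial
    obtain ⟨⟨z, hz⟩, hz1⟩ := exists_ne (1 : Subgroup.center D)
    have hz1' : (z : G) ≠ 1 := fun h => hz1 (Subtype.ext (Subtype.ext h))
    rw [Subgroup.mem_center_iff] at hz
    intro v hv d hd
    by_cases hv1 : v = 1
    · simp [hv1]
    obtain ⟨g, hg⟩ := isConj_iff.1 ((hconj z z.2 hz1').trans (hconj v hv hv1).symm)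
    have hd' : g⁻¹ * d * g ∈ D := by
      have := hDn.conj_mem d hd g⁻¹
      simpa using this
    have h := congrArg Subtype.val (hz ⟨_, hd'⟩)
    simp only [Subgroup.coe_mul] at h
    rw [← hg]
    have e := congrArg (fun t => g * t * g⁻¹) h
    simp only [mul_assoc, mul_inv_cancel_left, mul_inv_cancel, mul_one] at e ⊢
    exact e.symm
  obtain ⟨N, hN, hNc, n, hNi⟩ := hnilp u hu hup
  have hyC : y ∈ Subgroup.centralizer ({u} : Set G) :=
    Subgroup.mem_centralizer_singleton_iff.2 hyu
  have hyN : (⟨y, hyC⟩ : Subgroup.centralizer ({u} : Set G)) ∈ N := by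
    apply aux_mem N
    rw [hNi, Subgroup.orderOf_mk]
    exact (Nat.Coprime.pow_left n hyc).symm
  have hyD : ∀ d ∈ D, y * d = d * y := by
    intro d hd
    have hdC : d ∈ Subgroup.centralizer ({u} : Set G) :=
      Subgroup.mem_centralizer_singleton_iff.2 (hab d hd u hu)
    have h1 := N.mul_mem (hN.conj_mem _ hyN ⟨d, hdC⟩) (N.inv_mem hyN)
    have h2 : d * (y * d⁻¹ * y⁻¹) ∈ D := D.mul_mem hd (hDn.conj_mem _ (D.inv_mem hd) y)
    have h3 := Subgroup.orderOf_dvd_natCard N h1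
    obtain ⟨k, hk⟩ := hordD _ h2
    rw [← Subgroup.orderOf_coe] at h3
    have h4 : d * y * d⁻¹ * y⁻¹ = 1 := by
      rw [← orderOf_eq_one_iff]
      refine Nat.eq_one_of_dvd_coprimes (Nat.Coprime.pow_right k hNc) h3 ?_
      rw [← hk]
      simp [mul_assoc]
    rw [mul_inv_eq_one, mul_inv_eq_iff_eq_mul] at h4
    exact h4.symm
  have hyT : y ∈ D ⊔ E := hDEsup ▸ Subgroup.mem_top y
  obtain ⟨d, hd, e, he, hde⟩ := Subgroup.mem_sup_of_normal_left.1 hyT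
  have he1 : e = 1 := by
    apply hfaith e he
    intro c hc
    have h1 := hyD c hc
    rw [← hde] at h1
    have h2 := hab d hd c hc
    have h3 : d * (e * c) = d * (c * e) := by
      rw [← mul_assoc, h1, ← mul_assoc, ← mul_assoc, h2]
    exact mul_left_cancel h3
  rw [he1, mul_one] at hde
  exact hyp (hdvdD y (hde ▸ hd) hy1)
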